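/- Let X̄ be a proper metric space, X ⊆ X̄ a nonempty closed subset, t_* ∈ ℝ ∪ {−∞}, Ω = X × (t_*, ∞), and let ψ̄ be a monotonic function with induced function ψ. Let F = (Λ, R_λ, s_λ) be a nested and discrete family of resonant sets in X̄ whose associated sets are Borel, and let μ be a locally finite Borel measure with supp(μ) = X. Assume: (i) (Ω, ψ) is d_*-separating with respect to F; (ii) (Ω, ψ, μ) satisfies a power law: there are τ, c₁, c₂ > 0 with c₁ e^{−τt} ≤ μ(ψ(x, t)) ≤ c₂ e^{−τt} for all (x, t) ∈ Ω; (iii) (Ω, ψ, μ) is f-decaying with respect to F for a function f : [0, ∞] × ℝ → [0, ∞), nondecreasing in the first and nonincreasing in the second argument, which is (d_*, b_*, 1, 0)-decaying, i.e. there exists c₀ < 1 with f(b + d_*, b − 2 d_*) ≤ c₀ for all b > b_*; (iv) every nonempty open U ⊆ X contains a set ψ(x, t) for some (x, t) ∈ Ω, and there exist C, σ > 0 with diam(ψ(x, t)) ≤ C e^{−σt} for all (x, t) ∈ Ω. Then for every nonempty open U ⊆ X, the Hausdorff dimension of Bad(F) ∩ U is at least d_μ(U). -/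

import Mathlib

open Metric Set MeasureTheory Filter

open scoped ENNReal NNReal in
/-- The mass distribution principle, for a not necessarily measurable set `A`. -/
theorem le_dimH_of_measure_closedBall_le {E : Type*} [MetricSpace E] [MeasurableSpace E]
    [BorelSpace E] (ν : Measure E) {A : Set E} (hA : ν A ≠ 0) {s : ℝ≥0} (hs : 0 < s)
    {M : ℝ} {r₀ : ℝ} (hr₀ : 0 < r₀)
    (h : ∀ x ∈ A, ∀ r : ℝ, 0 < r → r < r₀ →
      ν (closedBall x r) ≤ ENNReal.ofReal (M * r ^ (s : ℝ))) :
    (s : ℝ≥0∞) ≤ dimH A := by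
  set K : ℝ := max M 1
  have hK : 0 < K := lt_of_lt_of_le one_pos (le_max_right _ _)
  have hs' : (0 : ℝ) < s := by exact_mod_cast hs
  have h' : ∀ x ∈ A, ∀ r : ℝ, 0 ≤ r → r < r₀ →
      ν (closedBall x r) ≤ ENNReal.ofReal (K * r ^ (s : ℝ)) := by
    intro x hx r hr hr'
    have hlim : Tendsto (fun ρ : ℝ => ENNReal.ofReal (K * ρ ^ (s : ℝ))) (nhdsWithin r (Ioi r))
        (nhds (ENNReal.ofReal (K * r ^ (s : ℝ)))) := by
      refine (ENNReal.continuous_ofReal.tendsto _).comp (Tendsto.const_mul _ ?_)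
      exact ((Real.continuous_rpow_const hs'.le).tendsto r).mono_left nhdsWithin_le_nhds
    refine ge_of_tendsto hlim ?_
    filter_upwards [Ioo_mem_nhdsGT hr'] with ρ hρ
    refine (measure_mono (closedBall_subset_closedBall hρ.1.le)).trans
      ((h x hx ρ (hr.trans_lt hρ.1) hρ.2).trans (ENNReal.ofReal_le_ofReal ?_))
    have : 0 ≤ ρ ^ (s : ℝ) := Real.rpow_nonneg (hr.trans hρ.1.le) _
    gcongr
    exact le_max_left _ _
  apply le_dimH_of_hausdorffMeasure_ne_zero
  have hle : (ENNReal.ofReal K)⁻¹ • ν.restrict A ≤ μH[(s : ℝ)] := by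
    refine Measure.le_hausdorffMeasure _ _ (ENNReal.ofReal (r₀ / 2))
      (by simpa using hr₀) fun S hS => ?_
    rw [← ediam_closure] at hS ⊢
    refine (measure_mono subset_closure).trans ?_
    set T := closure S
    rw [Measure.smul_apply, Measure.restrict_apply isClosed_closure.measurableSet, smul_eq_mul]
    rcases (T ∩ A).eq_empty_or_nonempty with he | ⟨x, hxT, hxA⟩
    · simp [T, he]
    have hfin : ediam T ≠ ∞ := (hS.trans_lt ENNReal.ofReal_lt_top).ne
    have hd : diam T ≤ r₀ / 2 := ENNReal.toReal_le_of_le_ofReal (by positivity) hS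
    have hsub : T ∩ A ⊆ closedBall x (diam T) := fun y hy =>
      dist_le_diam_of_mem' hfin hy.1 hxT
    have h1 := (measure_mono hsub).trans (h' x hxA (diam T) diam_nonneg (by linarith))
    rw [ENNReal.ofReal_mul hK.le, ← ENNReal.ofReal_rpow_of_nonneg diam_nonneg hs'.le,
      diam, ENNReal.ofReal_toReal hfin] at h1
    calc _ ≤ (ENNReal.ofReal K)⁻¹ * (ENNReal.ofReal K * ediam T ^ (s : ℝ)) := by gcongr
      _ = _ := by
        rw [← mul_assoc, ENNReal.inv_mul_cancel (by simpa using hK) ENNReal.ofReal_ne_top, one_mul]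
  intro h0
  have := hle A
  rw [h0, Measure.smul_apply, Measure.restrict_apply_self, smul_eq_mul] at this
  simp [hA] at this

open scoped ENNReal in
/-- A Cantor scheme in which every set of generation `n` has exactly `N` successors, pairwise
disjoint, carries a measure giving the same mass to all sets of one generation. -/
theorem exists_measure_of_cantor_scheme {E : Type*} [MetricSpace E] [MeasurableSpace E]
    [BorelSpace E] (μ : Measure E) {N : ℕ} [NeZero N] (B : ℕ → (ℕ → Fin N) → Set E)
    (hcomp : ∀ n ω, IsCompact (B n ω)) (hne : ∀ n ω, (B n ω).Nonempty)
    (hanti : ∀ n ω, B (n + 1) ω ⊆ B n ω)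
    (hcongr : ∀ n ω ω', (∀ i < n, ω i = ω' i) → B n ω = B n ω')
    (hdisj : ∀ n ω ω', (∀ i < n, ω i = ω' i) → ω n ≠ ω' n →
      Disjoint (B (n + 1) ω) (B (n + 1) ω'))
    (hdiam : ∀ ε > 0, ∃ n, ∀ ω, diam (B n ω) < ε) :
    ∃ ν : Measure E, ν {x | ∃ ω, ∀ n, x ∈ B n ω} ≠ 0 ∧
      ∀ (n : ℕ) (m : ℝ≥0∞) (x : E) (r : ℝ), (∀ ω, m ≤ μ (B n ω)) → (∀ ω, diam (B n ω) ≤ r) →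
        m * ν (closedBall x r) ≤ ((N : ℝ≥0∞)⁻¹) ^ n * μ (closedBall x (2 * r)) := by
  have hanti' : ∀ ω, Antitone fun n => B n ω := fun ω => antitone_nat_of_succ_le fun n => hanti n ω
  have hdisj' : ∀ n ω ω', (∃ i < n, ω i ≠ ω' i) → Disjoint (B n ω) (B n ω') := by
    intro n ω ω' hex
    classical
    obtain ⟨hk, hk'⟩ := Nat.find_spec hex
    have hmin : ∀ i < Nat.find hex, ω i = ω' i := by
      intro i hi
      by_contra hne'
      exact Nat.find_min hex hi ⟨hi.trans hk, hne'⟩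
    exact (hdisj _ ω ω' hmin hk').mono (hanti' ω hk) (hanti' ω' hk)
  have hpt : ∀ ω, ∃ x, ∀ n, x ∈ B n ω := by
    intro ω
    obtain ⟨x, hx⟩ := IsCompact.nonempty_iInter_of_sequence_nonempty_isCompact_isClosed
      (fun n => B n ω) (hanti · ω) (hne · ω) (hcomp 0 ω) (fun n => (hcomp n ω).isClosed)
    exact ⟨x, fun n => mem_iInter.1 hx n⟩
  choose p hp using hpt
  have hopen : ∀ n (ω : ℕ → Fin N), ∀ᶠ ω' in nhds ω, ∀ i < n, ω i = ω' i := by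
    intro n ω
    have : ∀ᶠ ω' in nhds ω, ∀ i ∈ Finset.range n, ω i = ω' i := by
      rw [Filter.eventually_all_finset]
      intro i _
      have := (continuous_apply (A := fun _ : ℕ => Fin N) i).tendsto ω
      have h2 := this.eventually (show ∀ᶠ y in nhds (ω i), ω i = y by simp [nhds_discrete])
      exact h2
    simpa using this
  have hpc : Continuous p := by
    rw [continuous_iff_continuousAt]
    intro ω
    rw [ContinuousAt, Metric.tendsto_nhds]
    intro ε hε
    obtain ⟨n, hn⟩ := hdiam ε hε
    filter_upwards [hopen n ω] with ω' hω'
    refine (dist_le_diam_of_mem (hcomp n ω).isBounded ?_ (hp ω n)).trans_lt (hn ω)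
    rw [hcongr n ω ω' hω']
    exact hp ω' n
  set P : Measure (ℕ → Fin N) :=
    Measure.infinitePi fun _ => (PMF.uniformOfFintype (Fin N)).toMeasure
  have hcyl : ∀ n (w : Fin n → Fin N), P {ω | ∀ i : Fin n, ω i = w i} = (N : ℝ≥0∞)⁻¹ ^ n := by
    intro n w
    have : {ω : ℕ → Fin N | ∀ i : Fin n, ω i = w i} = Set.pi (Finset.range n : Set ℕ)
        (fun i => {if h : i < n then w ⟨i, h⟩ else 0}) := by
      ext ω
      simp only [mem_ofPred_eq, Set.mem_pi, Finset.coe_range, mem_Iio, mem_singleton_iff]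
      constructor
      · intro h i hi
        simpa [hi] using h ⟨i, hi⟩
      · intro h i
        simpa using h i i.2
    rw [this, Measure.infinitePi_pi _ (fun i _ => measurableSet_singleton _)]
    simp
  refine ⟨P.map p, ?_, ?_⟩
  · have h1 : P (p ⁻¹' {x | ∃ ω, ∀ n, x ∈ B n ω}) = 1 := by
      have : p ⁻¹' {x | ∃ ω, ∀ n, x ∈ B n ω} = univ := by
        ext ω
        simpa using ⟨ω, hp ω⟩
      rw [this, measure_univ]
    have h2 := Measure.le_map_apply (μ := P) hpc.measurable.aemeasurable
      {x | ∃ ω, ∀ n, x ∈ B n ω}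
    rw [h1] at h2
    intro h0
    simp [h0] at h2
  · intro n m x r hm hr
    classical
    let ext' : (Fin n → Fin N) → ℕ → Fin N := fun w i => if h : i < n then w ⟨i, h⟩ else 0
    have hext : ∀ w (i : Fin n), ext' w i = w i := fun w i => by simp [ext']
    let W : Finset (Fin n → Fin N) :=
      Finset.univ.filter fun w => (B n (ext' w) ∩ closedBall x r).Nonempty
    rw [Measure.map_apply hpc.measurable isClosed_closedBall.measurableSet]
    have h1 : P (p ⁻¹' closedBall x r) ≤ W.card * (N : ℝ≥0∞)⁻¹ ^ n := by
      have hsub : p ⁻¹' closedBall x r ⊆ ⋃ w ∈ W, {ω | ∀ i : Fin n, ω i = w i} := by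
        intro ω hω
        simp only [mem_iUnion]
        refine ⟨fun i => ω i, ?_, fun i => rfl⟩
        simp only [W, Finset.mem_filter, Finset.mem_univ, true_and]
        refine ⟨p ω, ?_, hω⟩
        rw [hcongr n _ ω fun i hi => by simp [ext', hi]]
        exact hp ω n
      refine (measure_mono hsub).trans ((measure_biUnion_finset_le _ _).trans ?_)
      simp [hcyl]
    have h2 : (W.card : ℝ≥0∞) * m ≤ μ (closedBall x (2 * r)) := by
      have hsub : (⋃ w ∈ W, B n (ext' w)) ⊆ closedBall x (2 * r) := by
        simp only [iUnion_subset_iff]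
        intro w hw y hy
        simp only [W, Finset.mem_filter, Finset.mem_univ, true_and] at hw
        obtain ⟨z, hz, hzx⟩ := hw
        have h3 := (dist_le_diam_of_mem (hcomp n _).isBounded hy hz).trans (hr (ext' w))
        rw [mem_closedBall] at hzx ⊢
        linarith [dist_triangle y z x]
      refine le_trans ?_ (measure_mono hsub)
      rw [measure_biUnion_finset]
      · rw [← nsmul_eq_mul]
        exact Finset.card_nsmul_le_sum _ _ _ fun w _ => hm _
      · intro w _ w' _ hww
        obtain ⟨i, hi⟩ := Function.ne_iff.1 hww
        exact hdisj' _ _ _ ⟨i, i.2, by rwa [hext, hext]⟩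
      · exact fun w _ => (hcomp _ _).isClosed.measurableSet
    calc m * P (p ⁻¹' closedBall x r) ≤ m * (W.card * (N : ℝ≥0∞)⁻¹ ^ n) := by gcongr
      _ = (N : ℝ≥0∞)⁻¹ ^ n * (W.card * m) := by ring
      _ ≤ _ := by gcongr

theorem exists_scale {K C σ b t₀ η r : ℝ} (hK : 1 ≤ K) (hσb : 0 < σ * b) (hη : 0 ≤ η)
    (hKη : K ≤ Real.exp (σ * b * η)) (hr : 0 < r) (hr' : r < C * Real.exp (-σ * t₀)) :
    ∃ n : ℕ, C * Real.exp (-σ * (t₀ + n * b)) ≤ r ∧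
      K ^ n ≤ K * (C * Real.exp (-σ * t₀)) ^ η * r ^ (-η) := by
  set D : ℝ := C * Real.exp (-σ * t₀)
  have hD : 0 < D := hr.trans hr'
  have hexp : ∀ n : ℕ, C * Real.exp (-σ * (t₀ + n * b)) = D * Real.exp (-(σ * b)) ^ n := by
    intro n
    rw [← Real.exp_nat_mul, mul_assoc, ← Real.exp_add]
    ring_nf
  simp only [hexp]
  have hex : ∃ n : ℕ, D * Real.exp (-(σ * b)) ^ n ≤ r := by
    obtain ⟨n, hn⟩ := exists_pow_lt_of_lt_one (div_pos hr hD)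
      (show Real.exp (-(σ * b)) < 1 by simpa using hσb)
    refine ⟨n, ?_⟩
    rw [lt_div_iff₀ hD] at hn
    linarith
  classical
  refine ⟨Nat.find hex, Nat.find_spec hex, ?_⟩
  obtain ⟨k, hk⟩ : ∃ k, Nat.find hex = k + 1 := by
    refine Nat.exists_eq_succ_of_ne_zero fun h0 => ?_
    have := Nat.find_spec hex
    rw [h0] at this
    simp only [pow_zero, mul_one] at this
    linarith
  have hmin : r < D * Real.exp (-(σ * b)) ^ k := not_le.1 (Nat.find_min hex (by omega))
  rw [hk, pow_succ', mul_assoc]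
  gcongr
  have h1 : K ^ k ≤ (Real.exp (σ * b) ^ k) ^ η := by
    refine (pow_le_pow_left₀ (by linarith) hKη k).trans_eq ?_
    rw [← Real.exp_nat_mul, ← Real.exp_nat_mul, ← Real.exp_mul]
    ring_nf
  refine h1.trans ?_
  rw [Real.rpow_neg hr.le, ← Real.inv_rpow hr.le, ← Real.mul_rpow hD.le (by positivity)]
  refine Real.rpow_le_rpow (by positivity) ?_ hη
  rw [← div_eq_mul_inv, le_div_iff₀ hr]
  rw [Real.exp_neg, inv_pow, ← div_eq_mul_inv, lt_div_iff₀ (by positivity)] at hmin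
  linarith

theorem exists_fin_notMem_of_measure_lt {E : Type*} [MeasurableSpace E] (μ : Measure E)
    (G : Set E) (V : E → Set E) (v : ENNReal) (hv : ∀ y ∈ G, μ (V y) ≤ v) (N : ℕ)
    (hN : ∀ k < N, k * v < μ G) :
    ∃ y : Fin N → E, (∀ i, y i ∈ G) ∧ ∀ i j, i < j → y j ∉ V (y i) := by
  induction N with
  | zero => exact ⟨Fin.elim0, fun i => i.elim0, fun i => i.elim0⟩
  | succ N ih =>
    obtain ⟨y, hy, hy'⟩ := ih fun k hk => hN k (by omega)
    obtain ⟨z, hz, hz'⟩ : ∃ z ∈ G, z ∉ ⋃ i, V (y i) := by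
      by_contra! hsub
      have h1 : μ G ≤ N * v := by
        refine (measure_mono hsub).trans ((measure_iUnion_fintype_le _ _).trans ?_)
        refine (Finset.sum_le_sum fun i _ => hv _ (hy i)).trans ?_
        simp
      exact (hN N (by omega)).not_ge h1
    refine ⟨Fin.snoc y z, fun i => ?_, fun i j => ?_⟩
    · refine Fin.lastCases ?_ (fun i => ?_) i
      · simpa using hz
      · simpa using hy i
    · refine Fin.lastCases (fun h => absurd h (Fin.le_last _).not_gt) (fun i => ?_) i
      refine Fin.lastCases (fun _ => ?_) (fun j h => ?_) j
      · simp only [Fin.snoc_last, Fin.snoc_castSucc]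
        exact fun h => hz' (mem_iUnion.2 ⟨i, h⟩)
      · simpa using hy' i j (by simpa using h)

theorem exists_separated_children {E : Type*} [MeasurableSpace E] (X : Set E) (μ : Measure E)
    (ψ : E → ℝ → Set E) {tstar : EReal} {d b t c c₁ c₂ τ : ℝ} (ht : tstar < (t : EReal))
    (hd : 0 ≤ d) (hb : 2 * d ≤ b) (hc : c < 1) (hc' : 0 ≤ c) (hc₂ : 0 < c₂)
    (hψmono : ∀ (x : E) (t s : ℝ), tstar < (t : EReal) → 0 ≤ s → ψ x (t + s) ⊆ ψ x t)
    (hsep₁ : ∀ y ∈ X, ∀ t : ℝ, tstar < (t : EReal) → ∀ x ∈ X, x ∉ ψ y t →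
      Disjoint (ψ x (t + d) ∩ X) (ψ y (t + d)))
    (hsep₂ : ∀ x ∈ X, ∀ y ∈ X, ∀ t : ℝ, tstar < (t : EReal) →
      x ∈ ψ y (t + d) ∩ X → ψ x (t + d) ∩ X ⊆ ψ y t ∩ X)
    (hpow : ∀ x ∈ X, ∀ t : ℝ, tstar < (t : EReal) →
      ENNReal.ofReal (c₁ * Real.exp (-τ * t)) ≤ μ (ψ x t ∩ X) ∧
        μ (ψ x t ∩ X) ≤ ENNReal.ofReal (c₂ * Real.exp (-τ * t)))
    (Q : Set E)
    (hsepQ : ∀ t : ℝ, tstar < (t : EReal) → ∀ x ∈ X, x ∉ (⋃ y ∈ Q, ψ y t) →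
      Disjoint (ψ x (t + d) ∩ X) (⋃ y ∈ Q, ψ y (t + d)))
    {x : E} (hx : x ∈ X)
    (hdecay : μ ((ψ x (t + d) ∩ X) ∩ ⋃ y ∈ Q, ψ y (t + d + (b - 2 * d))) ≤
      ENNReal.ofReal c * μ (ψ x (t + d) ∩ X))
    {N : ℕ} (hN : (N : ℝ) ≤ (1 - c) * c₁ / c₂ * Real.exp (-2 * τ * d) * Real.exp (τ * b)) :
    ∃ y : Fin N → E, (∀ i, y i ∈ X ∧ ψ (y i) (t + b) ∩ X ⊆ ψ x t ∩ X ∧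
        Disjoint (ψ (y i) (t + b) ∩ X) (⋃ z ∈ Q, ψ z (t + b))) ∧
      ∀ i j, i ≠ j → Disjoint (ψ (y i) (t + b) ∩ X) (ψ (y j) (t + b) ∩ X) := by
  have htop : ∀ s, 0 ≤ s → tstar < ((t + s : ℝ) : EReal) := fun s hs =>
    ht.trans_le (EReal.coe_le_coe_iff.2 (by linarith))
  set u : ℝ := t + (b - d)
  have hu : tstar < (u : EReal) := htop _ (by linarith)
  have hud : u + d = t + b := by simp only [u]; ring
  have hu' : t + d + (b - 2 * d) = u := by simp only [u]; ring
  rw [hu'] at hdecay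
  set G : Set E := (ψ x (t + d) ∩ X) \ ⋃ y ∈ Q, ψ y u
  have hGX : G ⊆ X := fun y hy => hy.1.2
  obtain ⟨y, hyG, hy⟩ := exists_fin_notMem_of_measure_lt μ G (fun y => ψ y u ∩ X)
    (ENNReal.ofReal (c₂ * Real.exp (-τ * u))) (fun y hy => (hpow y (hGX hy) u hu).2) N <| by
    intro k hk
    by_contra! hle
    obtain ⟨hlow, hup⟩ := hpow x hx (t + d) (htop d hd)
    have hfin : μ (ψ x (t + d) ∩ X) ≠ ⊤ := (hup.trans_lt ENNReal.ofReal_lt_top).ne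
    have h1 := (measure_le_inter_add_sdiff μ (ψ x (t + d) ∩ X) (⋃ y ∈ Q, ψ y u)).trans
      (add_le_add hdecay hle)
    rw [← ENNReal.ofReal_toReal hfin] at h1 hlow
    set m := (μ (ψ x (t + d) ∩ X)).toReal
    have hm : 0 ≤ m := ENNReal.toReal_nonneg
    have hlow := (ENNReal.ofReal_le_ofReal_iff hm).1 hlow
    rw [← ENNReal.ofReal_mul hc', ← ENNReal.ofReal_natCast, ← ENNReal.ofReal_mul (by positivity),
      ← ENNReal.ofReal_add (by positivity) (by positivity),
      ENNReal.ofReal_le_ofReal_iff (by positivity)] at h1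
    have hkN : (k : ℝ) < (1 - c) * c₁ / c₂ * Real.exp (-2 * τ * d) * Real.exp (τ * b) :=
      lt_of_lt_of_le (by exact_mod_cast hk) hN
    have h2 : (k : ℝ) * (c₂ * Real.exp (-τ * u)) < (1 - c) * (c₁ * Real.exp (-τ * (t + d))) := by
      calc (k : ℝ) * (c₂ * Real.exp (-τ * u))
          < (1 - c) * c₁ / c₂ * Real.exp (-2 * τ * d) * Real.exp (τ * b) *
            (c₂ * Real.exp (-τ * u)) := by gcongr
        _ = (1 - c) * c₁ * (Real.exp (-2 * τ * d) * Real.exp (τ * b) * Real.exp (-τ * u)) := by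
          field_simp
        _ = _ := by
          rw [← Real.exp_add, ← Real.exp_add, mul_assoc]
          simp only [u]
          ring_nf
    have h3 := mul_le_mul_of_nonneg_left hlow (sub_nonneg.2 hc.le)
    linarith
  have hlt : ∀ i j, i < j → Disjoint (ψ (y j) (t + b) ∩ X) (ψ (y i) (t + b) ∩ X) := by
    intro i j hij
    have h1 : y j ∉ ψ (y i) u := fun h => hy i j hij ⟨h, hGX (hyG j)⟩
    have h2 := hsep₁ _ (hGX (hyG i)) u hu _ (hGX (hyG j)) h1
    rw [hud] at h2
    exact h2.mono_right inter_subset_left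
  refine ⟨y, fun i => ⟨hGX (hyG i), ?_, ?_⟩, fun i j hij => ?_⟩
  · refine Subset.trans ?_ (hsep₂ _ (hGX (hyG i)) _ hx t ht (hyG i).1)
    have := hψmono (y i) (t + d) (b - d) (htop d hd) (by linarith)
    rw [show t + d + (b - d) = t + b by ring] at this
    exact inter_subset_inter_left _ this
  · have := hsepQ u hu _ (hGX (hyG i)) (hyG i).2
    rwa [hud] at this
  · rcases hij.lt_or_gt with h | h
    · exact (hlt i j h).symm
    · exact hlt j i h

/-- The recursively chosen centres of the sets in a Cantor scheme with branching `N`. -/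
def cantorNode {E : Type*} {N : ℕ} (child : E → ℝ → Fin N → E) (x₀ : E) (t₀ b : ℝ) :
    ℕ → (ℕ → Fin N) → E
  | 0, _ => x₀
  | n + 1, ω => child (cantorNode child x₀ t₀ b n ω) (t₀ + n * b) (ω n)

theorem cantorNode_congr {E : Type*} {N : ℕ} (child : E → ℝ → Fin N → E) (x₀ : E) (t₀ b : ℝ)
    (n : ℕ) (ω ω' : ℕ → Fin N) (h : ∀ i < n, ω i = ω' i) :
    cantorNode child x₀ t₀ b n ω = cantorNode child x₀ t₀ b n ω' := by
  induction n with
  | zero => rfl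
  | succ n ih => simp only [cantorNode, ih fun i hi => h i (by omega), h n (by omega)]

theorem exists_measure_of_children {E : Type*} [MetricSpace E] [MeasurableSpace E]
    [BorelSpace E] (μ : Measure E) {X : Set E} (hXcl : IsClosed X) (ψ : E → ℝ → Set E)
    {tstar : EReal} {b σ C t₀ : ℝ} {a : ℝ → ENNReal} (hb : 0 < b) (hσ : 0 < σ)
    (ht₀ : tstar < (t₀ : EReal)) {x₀ : E} (hx₀ : x₀ ∈ X)
    (hψ : ∀ (x : E) (t : ℝ), tstar < (t : EReal) → IsCompact (ψ x t))
    (hψne : ∀ x ∈ X, ∀ t : ℝ, tstar < (t : EReal) → (ψ x t ∩ X).Nonempty)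
    (hdiam : ∀ x ∈ X, ∀ t : ℝ, tstar < (t : EReal) →
      diam (ψ x t ∩ X) ≤ C * Real.exp (-σ * t))
    (ha : ∀ x ∈ X, ∀ t : ℝ, tstar < (t : EReal) → a t ≤ μ (ψ x t ∩ X))
    (S : ℝ → Set E) {N : ℕ} (hN : 0 < N)
    (hchild : ∀ x ∈ X, ∀ t : ℝ, tstar < (t : EReal) →
      ∃ y : Fin N → E, (∀ i, y i ∈ X ∧ ψ (y i) (t + b) ∩ X ⊆ ψ x t ∩ X ∧
        Disjoint (ψ (y i) (t + b) ∩ X) (S t)) ∧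
      ∀ i j, i ≠ j → Disjoint (ψ (y i) (t + b) ∩ X) (ψ (y j) (t + b) ∩ X)) :
    ∃ ν : Measure E, ν {x ∈ ψ x₀ t₀ ∩ X | ∀ n : ℕ, x ∉ S (t₀ + n * b)} ≠ 0 ∧
      ∀ (n : ℕ) (x : E) (r : ℝ), C * Real.exp (-σ * (t₀ + n * b)) ≤ r →
        a (t₀ + n * b) * ν (closedBall x r) ≤
          ((N : ENNReal)⁻¹) ^ n * μ (closedBall x (2 * r)) := by
  have : NeZero N := ⟨hN.ne'⟩
  have hchild' : ∀ (x : E) (t : ℝ), ∃ y : Fin N → E, x ∈ X → tstar < (t : EReal) →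
      (∀ i, y i ∈ X ∧ ψ (y i) (t + b) ∩ X ⊆ ψ x t ∩ X ∧
        Disjoint (ψ (y i) (t + b) ∩ X) (S t)) ∧
      ∀ i j, i ≠ j → Disjoint (ψ (y i) (t + b) ∩ X) (ψ (y j) (t + b) ∩ X) := by
    intro x t
    by_cases h : x ∈ X ∧ tstar < (t : EReal)
    · obtain ⟨y, hy⟩ := hchild x h.1 t h.2
      exact ⟨y, fun _ _ => hy⟩
    · exact ⟨fun _ => x, fun h1 h2 => absurd ⟨h1, h2⟩ h⟩
  choose child hc using hchild'
  set g := cantorNode child x₀ t₀ b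
  have htime : ∀ n : ℕ, tstar < ((t₀ + n * b : ℝ) : EReal) := fun n =>
    ht₀.trans_le (EReal.coe_le_coe_iff.2 (by simpa using by positivity))
  have hsucc : ∀ n : ℕ, t₀ + ((n + 1 : ℕ) : ℝ) * b = t₀ + n * b + b := by
    intro n
    push_cast
    ring
  have hgX : ∀ n ω, g n ω ∈ X := by
    intro n ω
    induction n with
    | zero => exact hx₀
    | succ n ih => exact ((hc _ _ ih (htime n)).1 _).1
  obtain ⟨ν, hν, hν'⟩ := exists_measure_of_cantor_scheme μ
    (fun n ω => ψ (g n ω) (t₀ + n * b) ∩ X)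
    (fun n ω => (hψ _ _ (htime n)).inter_right hXcl)
    (fun n ω => hψne _ (hgX n ω) _ (htime n))
    (fun n ω => by
      simp only [hsucc]
      exact ((hc _ _ (hgX n ω) (htime n)).1 (ω n)).2.1)
    (fun n ω ω' h => by
      simp only [g, cantorNode_congr child x₀ t₀ b n ω ω' h])
    (fun n ω ω' h hne => by
      have hg : g n ω = g n ω' := cantorNode_congr child x₀ t₀ b n ω ω' h
      have := (hc _ _ (hgX n ω) (htime n)).2 _ _ hne
      simp only [hsucc]
      simp only [g, cantorNode] at hg this ⊢
      rwa [← hg])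
    (fun ε hε => by
      have hlim : Tendsto (fun n : ℕ => C * Real.exp (-σ * (t₀ + n * b))) atTop (nhds 0) := by
        rw [← mul_zero C]
        refine Tendsto.const_mul C (Real.tendsto_exp_atBot.comp ?_)
        refine Tendsto.const_mul_atTop_of_neg (neg_lt_zero.2 hσ) ?_
        exact tendsto_atTop_add_const_left _ _ (tendsto_natCast_atTop_atTop.atTop_mul_const hb)
      obtain ⟨n, hn⟩ := (hlim.eventually (gt_mem_nhds hε)).exists
      exact ⟨n, fun ω => (hdiam _ (hgX n ω) _ (htime n)).trans_lt hn⟩)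
  refine ⟨ν, fun h0 => hν (measure_mono_null ?_ h0), fun n x r hr =>
    hν' n _ x r (fun ω => ha _ (hgX n ω) _ (htime n))
      (fun ω => (hdiam _ (hgX n ω) _ (htime n)).trans hr)⟩
  rintro x ⟨ω, hx⟩
  refine ⟨by simpa [g, cantorNode] using hx 0, fun n => ?_⟩
  have h1 := hx (n + 1)
  simp only [hsucc] at h1
  exact disjoint_left.1 ((hc _ _ (hgX n ω) (htime n)).1 (ω n)).2.2 h1

theorem exists_measure_ball_le_rpow {E : Type*} [MetricSpace E] [ProperSpace E]
    [MeasurableSpace E] (μ : Measure E) [IsLocallyFiniteMeasure μ] {x : E} {α : ℝ} (hα : 0 ≤ α)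
    (h : α < liminf (fun r : ℝ => Real.log (μ (ball x r)).toReal / Real.log r)
      (nhdsWithin 0 (Ioi 0))) :
    ∃ k : ℕ, ∀ r : ℝ, 0 < r → r < 1 / (k + 1) → μ (ball x r) ≤ ENNReal.ofReal (r ^ α) := by
  rw [liminf_eq] at h
  obtain ⟨β, hβ, hαβ⟩ := exists_lt_of_lt_csSup (by
    by_contra hne
    rw [not_nonempty_iff_eq_empty.1 hne, Real.sSup_empty] at h
    linarith) h
  obtain ⟨δ, hδ, hball⟩ := mem_nhdsGT_iff_exists_Ioo_subset.1 hβ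
  obtain ⟨k, hk⟩ := exists_nat_one_div_lt (lt_min (mem_Ioi.1 hδ) one_pos)
  refine ⟨k, fun r hr hrk => ?_⟩
  have hr1 : r < 1 := (hrk.trans hk).trans_le (min_le_right _ _)
  have hq : β ≤ Real.log (μ (ball x r)).toReal / Real.log r :=
    hball ⟨hr, (hrk.trans hk).trans_le (min_le_left _ _)⟩
  have hfin : μ (ball x r) ≠ ⊤ :=
    (measure_mono ball_subset_closedBall).trans_lt
      (isCompact_closedBall x r).measure_lt_top |>.ne
  rw [← ENNReal.ofReal_toReal hfin]
  refine ENNReal.ofReal_le_ofReal ?_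
  rcases (ENNReal.toReal_nonneg (a := μ (ball x r))).eq_or_lt with h0 | hpos
  · rw [← h0]
    positivity
  · have hlog := Real.log_neg hr hr1
    rw [le_div_iff_of_neg hlog] at hq
    rw [← Real.log_le_log_iff hpos (by positivity), Real.log_rpow hr]
    exact hq.trans (mul_le_mul_of_nonpos_right hαβ.le hlog.le)

theorem exists_large_param {τ κ σ η b₀ : ℝ} (hτ : 0 < τ) (hκ : 0 < κ) (hσ : 0 < σ) (hη : 0 < η) :
    ∃ (b K : ℝ) (N : ℕ), b₀ < b ∧ 0 < b ∧ 1 ≤ K ∧ K ≤ Real.exp (σ * b * η) ∧ 0 < N ∧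
      (N : ℝ) ≤ κ * Real.exp (τ * b) ∧ (N : ℝ)⁻¹ ≤ K * Real.exp (-τ * b) := by
  set K : ℝ := max 1 (2 / κ)
  have hexp : ∀ ρ : ℝ, 0 < ρ → Tendsto (fun b : ℝ => Real.exp (ρ * b)) atTop atTop :=
    fun ρ hρ => Real.tendsto_exp_atTop.comp (tendsto_id.const_mul_atTop hρ)
  obtain ⟨b, hb₀, hb, hK, hκb⟩ := ((eventually_gt_atTop b₀).and ((eventually_gt_atTop 0).and
    (((hexp (σ * η) (by positivity)).eventually_ge_atTop K).and
      ((hexp τ hτ).eventually_ge_atTop (1 / κ))))).exists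
  rw [div_le_iff₀' hκ] at hκb
  have hfloor := Nat.lt_floor_add_one (κ * Real.exp (τ * b))
  have hN : 1 ≤ ⌊κ * Real.exp (τ * b)⌋₊ := (Nat.one_le_floor_iff _).2 hκb
  refine ⟨b, K, ⌊κ * Real.exp (τ * b)⌋₊, hb₀, hb, le_max_left _ _, ?_, hN,
    Nat.floor_le (by positivity), ?_⟩
  · rwa [show σ * b * η = σ * η * b by ring]
  · have hN' : (1 : ℝ) ≤ ⌊κ * Real.exp (τ * b)⌋₊ := by exact_mod_cast hN
    refine inv_le_of_inv_le₀ (by positivity) ?_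
    calc (K * Real.exp (-τ * b))⁻¹ ≤ (2 / κ * Real.exp (-τ * b))⁻¹ := by
          gcongr
          exact le_max_right _ _
      _ = κ * Real.exp (τ * b) / 2 := by
          rw [neg_mul, Real.exp_neg]
          field_simp
      _ ≤ _ := by linarith

open scoped ENNReal in
theorem measure_le_rpow_of_mul_le {v : ℝ≥0∞} {N n : ℕ} {K b τ t₀ c₁ r α η D : ℝ} (hN : 0 < N)
    (hc₁ : 0 < c₁) (hr : 0 < r)
    (hNK : (N : ℝ)⁻¹ ≤ K * Real.exp (-τ * b))
    (hKn : K ^ n ≤ K * D ^ η * r ^ (-η))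
    (hv : ENNReal.ofReal (c₁ * Real.exp (-τ * (t₀ + n * b))) * v ≤
      (N : ℝ≥0∞)⁻¹ ^ n * ENNReal.ofReal ((3 * r) ^ α)) :
    v ≤ ENNReal.ofReal (K * D ^ η * Real.exp (τ * t₀) / c₁ * 3 ^ α * r ^ (α - η)) := by
  set A : ℝ := c₁ * Real.exp (-τ * (t₀ + n * b))
  have hA : 0 < A := by positivity
  have hN' : (0 : ℝ) < N := by exact_mod_cast hN
  have h1 : v ≤ ENNReal.ofReal (A⁻¹ * ((N : ℝ)⁻¹ ^ n * (3 * r) ^ α)) := by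
    have h2 := mul_le_mul_right hv (ENNReal.ofReal A)⁻¹
    rw [← mul_assoc, ENNReal.inv_mul_cancel (by simpa using hA) ENNReal.ofReal_ne_top,
      one_mul] at h2
    rw [ENNReal.ofReal_mul (by positivity), ENNReal.ofReal_mul (by positivity),
      ENNReal.ofReal_pow (by positivity), ENNReal.ofReal_inv_of_pos hA,
      ENNReal.ofReal_inv_of_pos hN', ENNReal.ofReal_natCast]
    exact h2
  refine h1.trans (ENNReal.ofReal_le_ofReal ?_)
  have h3 : A⁻¹ * Real.exp (-τ * b) ^ n = Real.exp (τ * t₀) / c₁ := by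
    simp only [A]
    rw [mul_inv, ← Real.exp_neg, ← Real.exp_nat_mul, mul_assoc, ← Real.exp_add, div_eq_inv_mul]
    ring_nf
  calc A⁻¹ * ((N : ℝ)⁻¹ ^ n * (3 * r) ^ α)
      ≤ A⁻¹ * ((K * Real.exp (-τ * b)) ^ n * (3 * r) ^ α) := by gcongr
    _ = (A⁻¹ * Real.exp (-τ * b) ^ n) * K ^ n * (3 * r) ^ α := by ring
    _ ≤ (A⁻¹ * Real.exp (-τ * b) ^ n) * (K * D ^ η * r ^ (-η)) * (3 * r) ^ α := by gcongr
    _ = _ := by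
      rw [h3, Real.mul_rpow (by norm_num) hr.le, sub_eq_add_neg, Real.rpow_add hr]
      ring

/-- A point avoiding the thickened annuli of resonant sets at all scales `t₀ + n * b` avoids
uniform thickenings of all resonant sets. -/
theorem notMem_thickening_of_annuli {E Λ : Type*} (ψ : E → ℝ → Set E) {tstar : EReal}
    (hψmono : ∀ (x : E) (t s : ℝ), tstar < (t : EReal) → 0 ≤ s → ψ x (t + s) ⊆ ψ x t)
    (R : Λ → Set E) (sz : Λ → ℝ) {d b t₀ : ℝ} (hd : 0 ≤ d) (hb : 0 < b)
    (ht₀ : tstar < (t₀ : EReal)) (hfirst : ∀ lam, t₀ - b < sz lam) {x : E}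
    (hx : ∀ n : ℕ, x ∉ ⋃ y ∈ ((⋃ lam : Λ, ⋃ (_ : sz lam ≤ t₀ + n * b + d), R lam) \
      ⋃ lam : Λ, ⋃ (_ : sz lam ≤ t₀ + n * b + d - (b + d)), R lam), ψ y (t₀ + n * b + b))
    (lam : Λ) : x ∉ ⋃ y ∈ R lam, ψ y (sz lam + 2 * b) := by
  simp only [mem_iUnion, exists_prop, not_exists, not_and]
  intro y hy hxy
  have hex : ∃ n : ℕ, ∃ l, sz l ≤ t₀ + n * b ∧ y ∈ R l := by
    obtain ⟨n, hn⟩ := exists_nat_ge ((sz lam - t₀) / b)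
    rw [div_le_iff₀ hb] at hn
    exact ⟨n, lam, by linarith, hy⟩
  classical
  obtain ⟨l, hl, hyl⟩ := Nat.find_spec hex
  have hnot : ∀ l, y ∈ R l → t₀ + Nat.find hex * b - b < sz l := by
    intro l hyl
    by_contra! hle
    rcases Nat.eq_zero_or_eq_succ_pred (Nat.find hex) with h0 | h1
    · rw [h0] at hle
      simp only [Nat.cast_zero, zero_mul, add_zero] at hle
      linarith [hfirst l]
    · refine Nat.find_min hex (m := (Nat.find hex).pred) (by omega) ⟨l, ?_, hyl⟩
      rw [h1] at hle
      push_cast at hle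
      linarith
  set n := Nat.find hex
  refine hx n ?_
  simp only [mem_iUnion, exists_prop, Set.mem_sdiff, not_exists, not_and]
  refine ⟨y, ⟨⟨l, by linarith, hyl⟩, fun l' hl' hyl' => ?_⟩, ?_⟩
  · linarith [hnot l' hyl']
  · have h2 := hnot lam hy
    have h3 : tstar < ((t₀ + n * b + b : ℝ) : EReal) :=
      ht₀.trans_le (EReal.coe_le_coe_iff.2 (by
        have : 0 ≤ n * b := by positivity
        linarith))
    have h4 := hψmono y _ (sz lam + 2 * b - (t₀ + n * b + b)) h3 (by linarith)
    rw [add_sub_cancel] at h4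
    exact h4 hxy

/-- Under the separating, power-law, `f`-decaying (with
`(d_*, b_*, 1, 0)`-decaying `f`) and (MSG1-2) assumptions, for every nonempty
open `U ⊆ X` the Hausdorff dimension of `Bad(F) ∩ U` is at least `d_μ(U)`. -/
theorem stmt7 {Xbar : Type*} [MetricSpace Xbar] [ProperSpace Xbar]
    [MeasurableSpace Xbar] [BorelSpace Xbar]
    (X : Set Xbar) (hXne : X.Nonempty) (hXcl : IsClosed X)
    (tstar : EReal)
    (ψ : Xbar → ℝ → Set Xbar)
    (hψ : ∀ (x : Xbar) (t : ℝ), tstar < (t : EReal) →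
      IsCompact (ψ x t) ∧ (ψ x t).Nonempty)
    (hψmono : ∀ (x : Xbar) (t s : ℝ), tstar < (t : EReal) → 0 ≤ s →
      ψ x (t + s) ⊆ ψ x t)
    {Λ : Type*} [Countable Λ]
    (R : Λ → Set Xbar) (sz : Λ → ℝ)
    (hsz : ∀ lam : Λ, tstar < (sz lam : EReal))
    (hnested : ∀ lam bet : Λ, sz lam ≤ sz bet → R lam ⊆ R bet)
    (hdiscrete : ∀ t : ℝ, {lam : Λ | sz lam ≤ t}.Finite)
    -- the associated sets are Borel
    (hRBorel : ∀ r b t : ℝ, MeasurableSet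
      (⋃ y ∈ ((⋃ lam : Λ, ⋃ (_ : sz lam ≤ r), R lam) \
               ⋃ lam : Λ, ⋃ (_ : sz lam ≤ r - b), R lam), ψ y t))
    (μ : Measure Xbar) [IsLocallyFiniteMeasure μ]
    -- μ has support X
    (hsupp : ∀ x : Xbar, x ∈ X ↔ ∀ ε : ℝ, 0 < ε → 0 < μ (ball x ε))
    (dstar bstar : ℝ) (hdstar : 0 ≤ dstar) (hbstar : 2 * dstar < bstar)
    -- (i) (Ω, ψ) is d_*-separating with respect to F
    (hsepY : ∀ Y : Set Xbar,
      ((∃ y ∈ X, Y = {y}) ∨ (∃ r b : ℝ,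
        Y = (⋃ lam : Λ, ⋃ (_ : sz lam ≤ r), R lam) \
              ⋃ lam : Λ, ⋃ (_ : sz lam ≤ r - b), R lam)) →
      ∀ t : ℝ, tstar < (t : EReal) → ∀ x ∈ X, x ∉ (⋃ y ∈ Y, ψ y t) →
        Disjoint (ψ x (t + dstar) ∩ X) (⋃ y ∈ Y, ψ y (t + dstar)))
    (hsep2 : ∀ x ∈ X, ∀ y ∈ X, ∀ t : ℝ, tstar < (t : EReal) →
      x ∈ ψ y (t + dstar) ∩ X → ψ x (t + dstar) ∩ X ⊆ ψ y t ∩ X)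
    -- (ii) power law
    (τ c₁ c₂ : ℝ) (hτ : 0 < τ) (hc₁ : 0 < c₁) (hc₂ : 0 < c₂)
    (hpow : ∀ x ∈ X, ∀ t : ℝ, tstar < (t : EReal) →
      ENNReal.ofReal (c₁ * Real.exp (-τ * t)) ≤ μ (ψ x t ∩ X) ∧
        μ (ψ x t ∩ X) ≤ ENNReal.ofReal (c₂ * Real.exp (-τ * t)))
    -- (iii) f-decaying for a (d_*, b_*, 1, 0)-decaying f
    (f : ℝ → ℝ → ℝ)
    (hf0 : ∀ b s : ℝ, 0 ≤ b → 0 ≤ f b s)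
    (hfmono : ∀ b₁ b₂ s : ℝ, 0 ≤ b₁ → b₁ ≤ b₂ → f b₁ s ≤ f b₂ s)
    (hfanti : ∀ b s₁ s₂ : ℝ, 0 ≤ b → s₁ ≤ s₂ → f b s₂ ≤ f b s₁)
    (hdecay : ∀ x ∈ X, ∀ r : ℝ, tstar < (r : EReal) → ∀ b : ℝ, 0 ≤ b → ∀ s : ℝ,
      μ ((ψ x r ∩ X) ∩
          ⋃ y ∈ ((⋃ lam : Λ, ⋃ (_ : sz lam ≤ r), R lam) \
                  ⋃ lam : Λ, ⋃ (_ : sz lam ≤ r - b), R lam),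
            ψ y (r + s)) ≤ ENNReal.ofReal (f b s) * μ (ψ x r ∩ X))
    (c₀ : ℝ) (hc₀ : c₀ < 1)
    (hfdec : ∀ b : ℝ, bstar < b → f (b + dstar) (b - 2 * dstar) ≤ c₀)
    -- (iv) MSG1 and MSG2
    (hMSG1 : ∀ U : Set Xbar, IsOpen U → (U ∩ X).Nonempty →
      ∃ x ∈ X, ∃ t : ℝ, tstar < (t : EReal) ∧ ψ x t ∩ X ⊆ U ∩ X)
    (C σ : ℝ) (hC : 0 < C) (hσ : 0 < σ)
    (hMSG2 : ∀ x ∈ X, ∀ t : ℝ, tstar < (t : EReal) →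
      Metric.diam (ψ x t ∩ X) ≤ C * Real.exp (-σ * t)) :
    -- conclusion: dim(Bad(F) ∩ U) ≥ d_μ(U)
    ∀ U : Set Xbar, IsOpen U → (U ∩ X).Nonempty →
      ENNReal.ofReal (⨅ x : ↥(U ∩ X),
          liminf (fun r : ℝ =>
              Real.log (μ (ball (x : Xbar) r)).toReal / Real.log r)
            (nhdsWithin 0 (Ioi 0)))
        ≤ dimH ({x ∈ X | ∃ c : ℝ, ∀ lam : Λ,
            x ∉ ⋃ y ∈ R lam, ψ y (sz lam + c)} ∩ U) := by
  intro U hU hUX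
  have hself : ∀ x ∈ X, ∀ t : ℝ, tstar < (t : EReal) → (ψ x t ∩ X).Nonempty := by
    intro x hx t ht
    refine nonempty_of_measure_ne_zero (μ := μ) (ne_of_gt ?_)
    refine lt_of_lt_of_le ?_ (hpow x hx t ht).1
    simpa using by positivity
  set q : Xbar → ℝ := fun x => liminf (fun r : ℝ =>
    Real.log (μ (ball x r)).toReal / Real.log r) (nhdsWithin 0 (Ioi 0))
  set δ : ℝ := ⨅ x : ↥(U ∩ X), q x
  refine ENNReal.le_of_forall_nnreal_lt fun s hs => ?_
  rcases eq_or_lt_of_le (bot_le : (0 : NNReal) ≤ s) with rfl | hs0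
  · simp
  have hsδ : (s : ℝ) < δ := by
    have := (ENNReal.lt_ofReal_iff_toReal_lt ENNReal.coe_ne_top).1 hs
    simpa using this
  have hs0' : (0 : ℝ) < s := by exact_mod_cast hs0
  have hδq : ∀ x ∈ U ∩ X, δ ≤ q x := by
    intro x hx
    refine ciInf_le (f := fun x : ↥(U ∩ X) => q x) ?_ ⟨x, hx⟩
    by_contra hbdd
    have : δ = 0 := Real.iInf_of_not_bddBelow hbdd
    linarith
  set η : ℝ := (δ - s) / 2
  have hη : 0 < η := by
    simp only [η]
    linarith
  set α : ℝ := s + η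
  have hαδ : α < δ := by
    simp only [α, η]
    linarith
  have hα : 0 < α := by positivity
  obtain ⟨x₀, hx₀, t₀, ht₀, hsubU⟩ := hMSG1 U hU hUX
  set c : ℝ := max c₀ 0
  have hc : c < 1 := max_lt hc₀ one_pos
  have hc' : 0 ≤ c := le_max_right _ _
  obtain ⟨m, hm⟩ : ∃ m : ℝ, ∀ lam, m < sz lam := by
    obtain ⟨m, hm⟩ := ((hdiscrete t₀).image sz).bddBelow
    refine ⟨min m t₀ - 1, fun lam => ?_⟩
    rcases le_total (sz lam) t₀ with h | h
    · linarith [hm ⟨lam, h, rfl⟩, min_le_left m t₀]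
    · linarith [min_le_right m t₀]
  obtain ⟨b, K, N, hb₀, hb, hK, hKη, hN, hNκ, hNK⟩ :=
    exists_large_param (τ := τ) (κ := (1 - c) * c₁ / c₂ * Real.exp (-2 * τ * dstar)) (σ := σ)
      (η := η) (b₀ := max bstar (t₀ - m)) hτ
      (by
        have : 0 < 1 - c := sub_pos.2 hc
        positivity) hσ hη
  have hbstar' : bstar < b := (le_max_left _ _).trans_lt hb₀
  have hbm : t₀ - m < b := (le_max_right _ _).trans_lt hb₀
  let S : ℝ → Set Xbar := fun t =>
    ⋃ y ∈ ((⋃ lam : Λ, ⋃ (_ : sz lam ≤ t + dstar), R lam) \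
      ⋃ lam : Λ, ⋃ (_ : sz lam ≤ t + dstar - (b + dstar)), R lam), ψ y (t + b)
  obtain ⟨ν, hν, hνle⟩ := exists_measure_of_children μ hXcl ψ
    (a := fun t => ENNReal.ofReal (c₁ * Real.exp (-τ * t))) hb hσ ht₀ hx₀
    (fun x t ht => (hψ x t ht).1) hself hMSG2 (fun x hx t ht => (hpow x hx t ht).1)
    S hN
    (fun x hx t ht => exists_separated_children X μ ψ (c := c) ht hdstar (by linarith) hc hc'
      hc₂ hψmono
      (fun y hy t ht x hx hxy => by
        simpa using hsepY {y} (Or.inl ⟨y, hy, rfl⟩) t ht x hx (by simpa using hxy))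
      hsep2 hpow _ (hsepY _ (Or.inr ⟨t + dstar, b + dstar, rfl⟩)) hx
      ((hdecay x hx (t + dstar) (ht.trans_le (EReal.coe_le_coe_iff.2 (by linarith)))
        (b + dstar) (by linarith) (b - 2 * dstar)).trans (by
          gcongr
          exact (hfdec b hbstar').trans (le_max_left _ _))) hNκ)
  set F : Set Xbar := {x ∈ ψ x₀ t₀ ∩ X | ∀ n : ℕ, x ∉ S (t₀ + n * b)}
  have hFU : F ⊆ U ∩ X := fun x hx => hsubU hx.1
  have hFBad : F ⊆ {x ∈ X | ∃ c : ℝ, ∀ lam : Λ, x ∉ ⋃ y ∈ R lam, ψ y (sz lam + c)} ∩ U :=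
    fun x hx => ⟨⟨(hFU hx).2, 2 * b, notMem_thickening_of_annuli ψ hψmono R sz hdstar hb ht₀
      (fun lam => by linarith [hm lam]) hx.2⟩, (hFU hx).1⟩
  have hcover : F ⊆ ⋃ k : ℕ, F ∩ {x | ∀ r : ℝ, 0 < r → r < 1 / (k + 1) →
      μ (ball x r) ≤ ENNReal.ofReal (r ^ α)} := by
    intro x hx
    obtain ⟨k, hk⟩ := exists_measure_ball_le_rpow μ hα.le (hαδ.trans_le (hδq x (hFU hx)))
    exact mem_iUnion.2 ⟨k, hx, hk⟩
  obtain ⟨k, hk⟩ : ∃ k : ℕ, ν (F ∩ {x | ∀ r : ℝ, 0 < r → r < 1 / (k + 1) →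
      μ (ball x r) ≤ ENNReal.ofReal (r ^ α)}) ≠ 0 := by
    by_contra! h0
    exact hν (measure_mono_null hcover (measure_iUnion_null h0))
  refine le_trans (le_dimH_of_measure_closedBall_le ν hk hs0
    (M := K * (C * Real.exp (-σ * t₀)) ^ η * Real.exp (τ * t₀) / c₁ * 3 ^ α)
    (r₀ := min (1 / (k + 1) / 3) (C * Real.exp (-σ * t₀))) (by positivity) fun x hx r hr hr' => ?_)
    (dimH_mono (inter_subset_left.trans hFBad))
  obtain ⟨n, hn, hKn⟩ := exists_scale hK (by positivity) hη.le hKη hr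
    (hr'.trans_le (min_le_right _ _))
  have hr3 : 3 * r < 1 / (k + 1) := by
    have := hr'.trans_le (min_le_left _ _)
    linarith
  have h1 := (hνle n x r hn).trans (mul_le_mul_right ((measure_mono
    (closedBall_subset_ball (by linarith))).trans (hx.2 (3 * r) (by linarith) hr3)) _)
  have h2 := measure_le_rpow_of_mul_le hN hc₁ hr hNK hKn h1
  rwa [show α - η = s by simp [α]] at h2
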